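/- arXiv:cond-mat/0408321 — 8 statements merged into one kernel-verified Lean document; each statement's English description precedes it below -/
import Mathlib

section
/- For every real s, the Fourier transform of A satisfies ∫_ℝ A(z)·exp(−i·s·z) dz = (1/2)·exp((i·s/2)·ln 2)·Γ(1 + i·s/2), where Γ is the complex Gamma function. -/
/-!
The substitution `x = (1/2) e^{-2z}` maps `ℝ` bijectively onto `(0, ∞)` with `|dx| = e^{-2z} dz`.
Since `x ^ (is/2) = e^{-(is/2) ln 2} e^{-isz}`, it turns Euler's integral
`Γ(1 + is/2) = ∫₀^∞ e^{-x} x^{is/2} dx` into the Fourier integral of `A`, up to the constant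
`(1/2) e^{(is/2) ln 2}`. The substitution is justified by `range_half_exp_neg_two_mul`,
`hasDerivAt_half_exp_neg_two_mul` and `injective_half_exp_neg_two_mul`; the complex power is
computed in `half_exp_neg_two_mul_cpow`. The change-of-variables formula used needs no
integrability hypothesis.
-/

open Real Complex MeasureTheory

/-- The universal peak shape `A(z) = (1/2) e^{-2z} exp(-(1/2) e^{-2z})`. -/
noncomputable def A (z : ℝ) : ℝ :=
  (1 / 2) * Real.exp (-2 * z) * Real.exp (-(1 / 2) * Real.exp (-2 * z))

theorem range_half_exp_neg_two_mul :
    (fun z : ℝ => (1 / 2) * Real.exp (-2 * z)) '' Set.univ = Set.Ioi 0 := by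
  ext x
  simp only [Set.image_univ, Set.mem_range, Set.mem_Ioi]
  constructor
  · rintro ⟨z, rfl⟩
    positivity
  · intro hx
    refine ⟨-(1 / 2) * Real.log (2 * x), ?_⟩
    have h : -2 * (-(1 / 2) * Real.log (2 * x)) = Real.log (2 * x) := by ring
    rw [h, Real.exp_log (by positivity)]
    ring

theorem hasDerivAt_half_exp_neg_two_mul (z : ℝ) :
    HasDerivAt (fun z : ℝ => (1 / 2) * Real.exp (-2 * z)) (-Real.exp (-2 * z)) z := by
  have h := (((hasDerivAt_id z).const_mul (-2)).exp).const_mul (1 / 2)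
  convert! h using 1
  simp
  ring

theorem injective_half_exp_neg_two_mul :
    Function.Injective (fun z : ℝ => (1 / 2) * Real.exp (-2 * z)) := by
  intro a b h
  have h' : Real.exp (-2 * a) = Real.exp (-2 * b) := by
    simpa using h
  linarith [Real.exp_injective h']

theorem half_exp_neg_two_mul_cpow (z : ℝ) (w : ℂ) :
    (((1 / 2) * Real.exp (-2 * z) : ℝ) : ℂ) ^ w
      = Complex.exp (-(w * Real.log 2)) * Complex.exp (-(2 * w * z)) := by
  have hpos : 0 < (1 / 2) * Real.exp (-2 * z) := by positivity
  have hlog : Real.log ((1 / 2) * Real.exp (-2 * z)) = -Real.log 2 - 2 * z := by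
    rw [Real.log_mul (by norm_num) (Real.exp_pos _).ne', Real.log_exp, one_div, Real.log_inv]
    ring
  rw [Complex.cpow_def_of_ne_zero (by exact_mod_cast hpos.ne'), ← Complex.ofReal_log hpos.le,
    hlog, ← Complex.exp_add]
  congr 1
  push_cast
  ring

theorem stmt_2 (s : ℝ) :
    (∫ z : ℝ, (A z : ℂ) * Complex.exp (-(Complex.I * s * z)))
      = (1 / 2) * Complex.exp ((Complex.I * s / 2) * Real.log 2) *
        Complex.Gamma (1 + Complex.I * s / 2) := by
  rw [Complex.Gamma_eq_integral (by simp), Complex.GammaIntegral,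
    ← range_half_exp_neg_two_mul,
    integral_image_eq_integral_abs_deriv_smul MeasurableSet.univ
      (fun z _ => (hasDerivAt_half_exp_neg_two_mul z).hasDerivWithinAt)
      injective_half_exp_neg_two_mul.injOn,
    Measure.restrict_univ, ← integral_const_mul]
  -- The two integrands now agree pointwise.
  congr 1
  funext z
  rw [add_sub_cancel_left, half_exp_neg_two_mul_cpow, abs_neg, abs_of_pos (Real.exp_pos _),
    Complex.real_smul]
  have hc : Complex.exp (Complex.I * s / 2 * Real.log 2)
      * Complex.exp (-(Complex.I * s / 2 * Real.log 2)) = 1 := by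
    rw [← Complex.exp_add, add_neg_cancel, Complex.exp_zero]
  have he : -(2 * (Complex.I * s / 2) * z) = -(Complex.I * s * z) := by ring
  have hn : -(1 / 2) * Real.exp (-2 * z) = -(1 / 2 * Real.exp (-2 * z)) := by ring
  rw [he, A, hn, Complex.ofReal_mul, Complex.ofReal_mul]
  push_cast
  linear_combination (-(1 / 2) * Complex.exp (-2 * z)
    * Complex.exp (-(1 / 2 * Complex.exp (-2 * z))) * Complex.exp (-(Complex.I * s * z))) * hc
end

section
/- For every a > 0 and every y ∈ ℝ, the Fourier series of Q_a converges pointwise to Q_a: Q_a(y) = Σ_{q∈ℤ} exp((π·i·q/a)·ln 2)·Γ(1 + π·i·q/a)·exp(2·π·i·q·y/a), where the sum over q ∈ ℤ is absolutely convergent and Γ is the complex Gamma function. -/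
/-!
The statement is Poisson summation for `f x = 2 a A (a x)`, evaluated at the point `y / a`:
`∑ f (y / a + k)` is `Q a y` after `k ↦ -k`, and `𝓕 f q` is the `q`-th coefficient.

Since `2 A (u / 2) = e^{-u} exp (-e^{-u} / 2)`, the substitution `t = e^{-u}` turns `𝓕 f q` into half
the Mellin transform of `exp (-t / 2)` at `s = 1 + π i q / a`, which is `2 ^ s Γ(s)`
(`fourier_scaled_A`). Poisson summation needs two estimates: `A z = O(|z|⁻²)`
(`A_le_inv_sq`), and summability of the coefficients. For the latter, two applications of the
functional equation give `Γ(1 + i t) = Γ(3 + i t) / ((1 + i t) (2 + i t))`, and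
`|Γ(3 + i t)| ≤ Γ(3) = 2` by Euler's integral, so `|Γ(1 + i t)| ≤ 2 / t²`
(`norm_Gamma_one_add_le`); the exponential factors have modulus one.
-/

open Real Complex

/-- The universal periodic function `Q_a(y) = 2a ∑_{k ∈ ℤ} A(y - k a)`. -/
noncomputable def Q (a y : ℝ) : ℝ := 2 * a * ∑' k : ℤ, A (y - k * a)

open MeasureTheory Filter Asymptotics
open scoped FourierTransform Topology

/-- Euler's integral is dominated by its value at the real part. -/
lemma norm_Gamma_le_Gamma_re {s : ℂ} (hs : 0 < s.re) : ‖Complex.Gamma s‖ ≤ Real.Gamma s.re := by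
  rw [Complex.Gamma_eq_integral hs, Real.Gamma_eq_integral hs, Complex.GammaIntegral]
  refine (norm_integral_le_integral_norm _).trans (le_of_eq ?_)
  refine setIntegral_congr_fun measurableSet_Ioi fun x hx => ?_
  have hx' : 0 < x := hx
  simp only [norm_mul, Complex.norm_real, Real.norm_eq_abs, Real.abs_exp]
  rw [Complex.norm_cpow_eq_rpow_re_of_pos hx']
  simp

lemma norm_Gamma_one_add_le {t : ℝ} (ht : t ≠ 0) :
    ‖Complex.Gamma (1 + t * Complex.I)‖ ≤ 2 * (1 / t ^ 2) := by
  have h1 : (1 + t * Complex.I : ℂ) ≠ 0 := fun h => by simpa using congrArg Complex.re h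
  have h2 : (2 + t * Complex.I : ℂ) ≠ 0 := fun h => by simpa using congrArg Complex.re h
  have e : Complex.Gamma (3 + t * Complex.I) =
      (2 + t * Complex.I) * ((1 + t * Complex.I) * Complex.Gamma (1 + t * Complex.I)) := by
    rw [← Complex.Gamma_add_one _ h1, show (1 + t * Complex.I + 1 : ℂ) = 2 + t * Complex.I by ring,
      ← Complex.Gamma_add_one _ h2]
    congr 1; ring
  have h3 : ‖Complex.Gamma (3 + t * Complex.I)‖ ≤ 2 := by
    have h := norm_Gamma_le_Gamma_re (s := 3 + t * Complex.I) (by simp)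
    have hG : Real.Gamma 3 = 2 := by simp
    simpa [hG] using h
  rw [e, norm_mul, norm_mul] at h3
  have n1 : |t| ≤ ‖(1 + t * Complex.I : ℂ)‖ := by
    simpa using Complex.abs_im_le_norm (1 + t * Complex.I)
  have n2 : |t| ≤ ‖(2 + t * Complex.I : ℂ)‖ := by
    simpa using Complex.abs_im_le_norm (2 + t * Complex.I)
  have ht2 : 0 < t ^ 2 := by positivity
  have h4 : t ^ 2 * ‖Complex.Gamma (1 + t * Complex.I)‖ ≤ 2 := by
    refine le_trans ?_ h3
    rw [← mul_assoc, ← sq_abs, sq]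
    gcongr
  rw [mul_one_div, le_div_iff₀ ht2]
  linarith

lemma A_nonneg (z : ℝ) : 0 ≤ A z := by unfold A; positivity

/-- With `w = e^{-2z}`, the bounds `w e^{-w/2} ≤ w` and `w e^{-w/2} ≤ 16 / w` control the two
ends of the line. -/
lemma A_le_exp_neg_abs (z : ℝ) : A z ≤ 8 * Real.exp (-(2 * |z|)) := by
  have hw := Real.exp_pos (-2 * z)
  rcases le_total 0 z with hz | hz
  · have h : Real.exp (-(1 / 2) * Real.exp (-2 * z)) ≤ 1 := by
      rw [Real.exp_le_one_iff]; linarith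
    rw [abs_of_nonneg hz, show -(2 * z) = -2 * z by ring, A]
    nlinarith
  · rw [abs_of_nonpos hz, show -(2 * -z) = -(-2 * z) by ring, A, Real.exp_neg]
    set w := Real.exp (-2 * z)
    have h1 : w / 4 ≤ Real.exp (w / 4) := by linarith [Real.add_one_le_exp (w / 4)]
    have h2 : (w / 4) ^ 2 ≤ Real.exp (w / 2) := by
      rw [show w / 2 = w / 4 + w / 4 by ring, Real.exp_add, sq]
      gcongr
    rw [show -(1 / 2) * w = -(w / 2) by ring, Real.exp_neg, ← div_eq_mul_inv, ← div_eq_mul_inv,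
      div_le_div_iff₀ (Real.exp_pos _) hw]
    nlinarith

lemma A_le_inv_sq {z : ℝ} (hz : z ≠ 0) : A z ≤ 4 * (z ^ 2)⁻¹ := by
  refine (A_le_exp_neg_abs z).trans ?_
  have h := Real.quadratic_le_exp_of_nonneg (x := 2 * |z|) (by positivity)
  have h' : 2 * z ^ 2 ≤ Real.exp (2 * |z|) := by
    rw [mul_pow, sq_abs] at h
    linarith [abs_nonneg z]
  have hz2 : 0 < z ^ 2 := by positivity
  rw [Real.exp_neg, ← div_eq_mul_inv, ← div_eq_mul_inv, div_le_div_iff₀ (Real.exp_pos _) hz2]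
  linarith

/-- The coefficient is half the Mellin transform of `exp (-t / 2)` at `1 + π i n / a`. -/
lemma fourier_scaled_A {a : ℝ} (ha : 0 < a) (n : ℤ) :
    𝓕 (fun x : ℝ => ((2 * a * A (a * x) : ℝ) : ℂ)) (n : ℝ) =
      Complex.exp ((Real.pi * Complex.I * n / a) * Real.log 2) *
        Complex.Gamma (1 + Real.pi * Complex.I * n / a) := by
  have hac : (a : ℂ) ≠ 0 := Complex.ofReal_ne_zero.mpr ha.ne'
  have hs' : (1 + Real.pi * Complex.I * n / a : ℂ) =
      1 + ((Real.pi * n / a : ℝ) : ℂ) * Complex.I := by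
    push_cast; ring
  have hre : (1 + Real.pi * Complex.I * n / a : ℂ).re = 1 := by rw [hs']; simp
  have him : (1 + Real.pi * Complex.I * n / a : ℂ).im = Real.pi * n / a := by rw [hs']; simp
  have hm := mellin_eq_fourier (fun t : ℝ => Complex.exp (-(((1 / 2 : ℝ) : ℂ) * t)))
    (s := 1 + Real.pi * Complex.I * n / a)
  have hI := Complex.integral_cpow_mul_exp_neg_mul_Ioi (a := 1 + Real.pi * Complex.I * n / a)
    (r := 1 / 2) (by rw [hre]; norm_num) (by norm_num)
  rw [mellin] at hm
  simp only [smul_eq_mul] at hm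
  rw [hI, hre, him, Real.fourier_real_eq_integral_exp_smul] at hm
  have h2 : (1 / ((1 / 2 : ℝ) : ℂ)) ^ (1 + Real.pi * Complex.I * n / a : ℂ) =
      2 * Complex.exp ((Real.pi * Complex.I * n / a) * Real.log 2) := by
    have : (1 / ((1 / 2 : ℝ) : ℂ)) = ((2 : ℝ) : ℂ) := by push_cast; norm_num
    rw [this, Complex.cpow_add _ _ (by norm_num), Complex.cpow_one,
      Complex.cpow_def_of_ne_zero (by norm_num), Complex.ofReal_log (by norm_num), mul_comm
      (Complex.log _)]
    norm_num
  rw [h2] at hm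
  -- rescaling by `2 a` matches the two Fourier integrals
  have hc := Measure.integral_comp_mul_left (fun v : ℝ =>
      Complex.exp (((-2 * Real.pi * v * (Real.pi * n / a / (2 * Real.pi)) : ℝ) : ℂ) * Complex.I) •
      (Real.exp (-1 * v) • Complex.exp (-(((1 / 2 : ℝ) : ℂ) * (Real.exp (-v) : ℝ))))) (2 * a)
  rw [← hm, abs_of_pos (by positivity)] at hc
  rw [Real.fourier_real_eq_integral_exp_smul]
  have hl : ∀ v : ℝ, Complex.exp (((-2 * Real.pi * v * n : ℝ) : ℂ) * Complex.I) •
      ((2 * a * A (a * v) : ℝ) : ℂ) = (a : ℂ) * (Complex.exp (((-2 * Real.pi * (2 * a * v) *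
        (Real.pi * n / a / (2 * Real.pi)) : ℝ) : ℂ) * Complex.I) •
      (Real.exp (-1 * (2 * a * v)) •
        Complex.exp (-(((1 / 2 : ℝ) : ℂ) * (Real.exp (-(2 * a * v)) : ℝ))))) := by
    intro v
    have e1 : -2 * Real.pi * (2 * a * v) * (Real.pi * n / a / (2 * Real.pi)) =
        -2 * Real.pi * v * n := by
      have := Real.pi_ne_zero
      field_simp
    rw [e1, A, show -2 * (a * v) = -(2 * a * v) by ring, neg_one_mul, Complex.real_smul]
    push_cast
    simp only [smul_eq_mul, neg_mul]
    ring
  simp_rw [hl]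
  rw [integral_const_mul, hc, Complex.real_smul]
  push_cast
  field_simp

lemma fourier_scaled_A_summable {a : ℝ} (ha : 0 < a) :
    Summable fun n : ℤ => ‖Complex.exp ((Real.pi * Complex.I * n / a) * Real.log 2) *
        Complex.Gamma (1 + Real.pi * Complex.I * n / a)‖ := by
  have hsum : Summable fun n : ℤ => 2 * (a / Real.pi) ^ 2 * (1 / (n : ℝ) ^ 2) :=
    (Real.summable_one_div_int_pow.mpr (by norm_num)).mul_left _
  refine Summable.of_norm_bounded_eventually hsum ?_
  filter_upwards [(Set.finite_singleton (0 : ℤ)).compl_mem_cofinite] with n hn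
  have hn' : (n : ℝ) ≠ 0 := by exact_mod_cast hn
  have hpi := Real.pi_ne_zero
  have e1 : (Real.pi * Complex.I * n / a : ℂ) * Real.log 2 =
      ((Real.pi * n / a * Real.log 2 : ℝ) : ℂ) * Complex.I := by push_cast; ring
  have e2 : (1 + Real.pi * Complex.I * n / a : ℂ) =
      1 + ((Real.pi * n / a : ℝ) : ℂ) * Complex.I := by push_cast; ring
  rw [norm_norm, norm_mul, e1, Complex.norm_exp_ofReal_mul_I, one_mul, e2]
  refine (norm_Gamma_one_add_le (by positivity)).trans (le_of_eq ?_)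
  field_simp

theorem stmt_3 (a : ℝ) (ha : 0 < a) (y : ℝ) :
    Summable (fun q : ℤ =>
      ‖Complex.exp ((Real.pi * Complex.I * q / a) * Real.log 2) *
        Complex.Gamma (1 + Real.pi * Complex.I * q / a) *
        Complex.exp (2 * Real.pi * Complex.I * q * y / a)‖) ∧
    (Q a y : ℂ) = ∑' q : ℤ,
      Complex.exp ((Real.pi * Complex.I * q / a) * Real.log 2) *
        Complex.Gamma (1 + Real.pi * Complex.I * q / a) *
        Complex.exp (2 * Real.pi * Complex.I * q * y / a) := by
  have hsum := fourier_scaled_A_summable ha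
  constructor
  · refine hsum.congr fun q => ?_
    have e : (2 * Real.pi * Complex.I * q * y / a : ℂ) =
        ((2 * Real.pi * q * y / a : ℝ) : ℂ) * Complex.I := by push_cast; ring
    rw [norm_mul _ (Complex.exp (2 * Real.pi * Complex.I * q * y / a)), e,
      Complex.norm_exp_ofReal_mul_I, mul_one]
  · have hc : Continuous fun x : ℝ => ((2 * a * A (a * x) : ℝ) : ℂ) := by
      unfold A; fun_prop
    have hO : (fun x : ℝ => ((2 * a * A (a * x) : ℝ) : ℂ)) =O[cocompact ℝ]
        fun x : ℝ => |x| ^ (-2 : ℝ) := by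
      refine IsBigO.of_bound (8 / a) ?_
      filter_upwards [(isCompact_singleton (x := (0 : ℝ))).compl_mem_cocompact] with x hx
      have hx' : x ≠ 0 := hx
      have h := A_le_inv_sq (mul_ne_zero ha.ne' hx')
      have e : |x| ^ (-2 : ℝ) = (x ^ 2)⁻¹ := by
        rw [Real.rpow_neg (abs_nonneg x), Real.rpow_two, sq_abs]
      rw [e, Complex.norm_real, Real.norm_of_nonneg (mul_nonneg (by positivity) (A_nonneg _)),
        Real.norm_of_nonneg (by positivity)]
      calc 2 * a * A (a * x) ≤ 2 * a * (4 * ((a * x) ^ 2)⁻¹) := by gcongr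
        _ = 8 / a * (x ^ 2)⁻¹ := by field_simp; ring
    have hP := Real.tsum_eq_tsum_fourier_of_rpow_decay_of_summable hc one_lt_two hO
      (by simp_rw [fourier_scaled_A ha]; exact hsum.of_norm) (y / a)
    simp_rw [fourier_scaled_A ha, fourier_coe_apply] at hP
    have hL : (Q a y : ℂ) = ∑' n : ℤ, ((2 * a * A (a * (y / a + n)) : ℝ) : ℂ) := by
      rw [← Complex.ofReal_tsum, Q, ← tsum_mul_left, ← (Equiv.neg ℤ).tsum_eq]
      congr 2
      ext n
      congr 2
      simp only [Equiv.neg_apply]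
      push_cast
      field_simp
      ring
    rw [hL, hP]
    refine tsum_congr fun q => ?_
    congr 2
    push_cast
    ring
end

section
/- Let T > 0, M > 0, n ∈ ℕ, and let Q : ℝ → ℝ be measurable with 0 ≤ Q(t) ≤ M for all t, Q(t + T) = Q(t) for all t, and (1/T)·∫_0^T Q(t) dt = 1. Then (β^{n+1}/n!)·∫_0^∞ t^n · Q(t) · exp(−β·t) dt → 1 as β → 0⁺. In particular, when the modulation period T is small compared with the decay time 1/β, the moments of the periodically modulated exponential density approach those of a pure exponential distribution. -/
/-!
Write `Q = 1 + F`, where `F` is bounded, `T`-periodic and has mean zero. The constant `1` contributes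
exactly `β ^ (n + 1) / n! * ∫ t ^ n * exp (-β t) = 1` (`integral_pow_mul_exp`), so only the
contribution of `F` has to be shown to vanish.

Because `F` has mean zero over a period, its primitive `H t = ∫ s in 0..t, F s` is again periodic,
hence bounded by some `C` (`abs_primitive_le`). Integrating by parts moves the derivative onto the
smooth weight `g t = t ^ n * exp (-β t)`, and `∫ |g'| ≤ 2 * n! / β ^ n`, one power of `β` better than
`∫ g = n! / β ^ (n + 1)` (`abs_integral_mul_weight_le`). After multiplication by `β ^ (n + 1) / n!`
the error is therefore at most `2 * C * β`.
-/

open Real MeasureTheory Filter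

/-- Integrability half of the Gamma integral with a natural exponent. -/
lemma integrableOn_pow_mul_exp (k : ℕ) {β : ℝ} (hβ : 0 < β) :
    IntegrableOn (fun t : ℝ => t ^ k * Real.exp (-β * t)) (Set.Ioi 0) := by
  have h := integrableOn_rpow_mul_exp_neg_mul_rpow (p := 1) (s := k) (b := β)
    (by have : (0:ℝ) ≤ k := k.cast_nonneg
        linarith) one_pos hβ
  simpa using h

lemma integral_pow_mul_exp (k : ℕ) {β : ℝ} (hβ : 0 < β) :
    ∫ t in Set.Ioi (0:ℝ), t ^ k * Real.exp (-β * t) = k.factorial / β ^ (k + 1) := by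
  have h := Real.integral_rpow_mul_exp_neg_mul_Ioi (a := (k:ℝ) + 1) (r := β) (by positivity) hβ
  rw [Real.Gamma_nat_eq_factorial] at h
  have h2 : (1 / β) ^ ((k:ℝ) + 1) = 1 / β ^ (k + 1) := by
    rw [show ((k:ℝ) + 1) = ((k + 1 : ℕ) : ℝ) by push_cast; ring, Real.rpow_natCast, one_div_pow]
  rw [h2] at h
  rw [div_eq_mul_one_div, mul_comm, ← h]
  simp [neg_mul]

/-- A periodic, bounded, mean-zero function has a bounded primitive, since the primitive is itself
periodic. -/
lemma abs_primitive_le {T K : ℝ} {F : ℝ → ℝ} (hT : 0 < T)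
    (hF : ∀ a b, IntervalIntegrable F volume a b) (hK : ∀ t, |F t| ≤ K)
    (hper : Function.Periodic F T) (h0 : ∫ t in (0:ℝ)..T, F t = 0) (t : ℝ) :
    |∫ s in (0:ℝ)..t, F s| ≤ K * T := by
  have hH : Function.Periodic (fun t => ∫ s in (0:ℝ)..t, F s) T := by
    intro t
    have := hper.intervalIntegral_add_eq_add 0 t hF
    simpa [h0] using this
  obtain ⟨y, hy, hty⟩ := hH.exists_mem_Ico₀ hT t
  rw [hty]
  have h := intervalIntegral.norm_integral_le_of_norm_le_const (a := 0) (b := y) (f := F) (C := K)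
    (fun x _ => hK x)
  rw [Real.norm_eq_abs, sub_zero, abs_of_nonneg hy.1] at h
  exact h.trans (mul_le_mul_of_nonneg_left hy.2.le ((abs_nonneg _).trans (hK 0)))

/-- Integration by parts on a bounded interval: testing `F` against the weight `t ^ n * exp (-β t)`
is controlled by a bound `C` for the primitive of `F`. -/
lemma abs_intervalIntegral_mul_weight_le {C β : ℝ} {F : ℝ → ℝ} (n : ℕ) (hβ : 0 < β)
    (hF : ∀ a b, IntervalIntegrable F volume a b)
    (hC : ∀ t, |∫ s in (0:ℝ)..t, F s| ≤ C) {R : ℝ} (hR : 0 ≤ R) :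
    |∫ t in (0:ℝ)..R, F t * (t ^ n * Real.exp (-β * t))| ≤
      C * (R ^ n * Real.exp (-β * R)) +
      ∫ t in (0:ℝ)..R, C * (n * (t ^ (n - 1) * Real.exp (-β * t)) +
        β * (t ^ n * Real.exp (-β * t))) := by
  set H : ℝ → ℝ := fun t => ∫ s in (0:ℝ)..t, F s with hHdef
  set g : ℝ → ℝ := fun t => t ^ n * Real.exp (-β * t) with hg
  have hgd : ∀ t, HasDerivAt g (n * (t ^ (n - 1) * Real.exp (-β * t)) -
      β * (t ^ n * Real.exp (-β * t))) t := by
    intro t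
    have h1 := (hasDerivAt_pow n t).mul (((hasDerivAt_id t).const_mul (-β)).exp)
    refine HasDerivAt.congr_deriv (f := g) h1 ?_
    simp only [id]
    ring
  have hHac : AbsolutelyContinuousOnInterval H 0 R :=
    (hF 0 R).absolutelyContinuousOnInterval_intervalIntegral (by simp)
  have hgac : AbsolutelyContinuousOnInterval g 0 R := by
    apply ContDiffOn.absolutelyContinuousOnInterval
    apply ContDiff.contDiffOn
    rw [hg]
    fun_prop
  have hibp := hgac.integral_mul_deriv_eq_deriv_mul hHac
  -- Lebesgue differentiation gives `F` as the derivative of `H` only almost everywhere.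
  have hHd : ∀ᵐ t, t ∈ Set.uIoc 0 R → g t * deriv H t = F t * (t ^ n * Real.exp (-β * t)) := by
    filter_upwards [(hF 0 R).ae_hasDerivAt_integral] with t ht htm
    rw [(ht (Set.uIoc_subset_uIcc htm) 0 (by simp)).deriv, mul_comm]
  rw [intervalIntegral.integral_congr_ae hHd] at hibp
  rw [hibp]
  have hH0 : H 0 = 0 := by simp [hHdef]
  rw [hH0, mul_zero, sub_zero]
  refine (abs_sub _ _).trans (add_le_add ?_ ?_)
  · rw [abs_mul, mul_comm, abs_of_nonneg (a := g R) (by positivity)]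
    exact mul_le_mul_of_nonneg_right (hC R) (by positivity)
  · rw [← Real.norm_eq_abs]
    apply intervalIntegral.norm_integral_le_of_norm_le hR
    · refine Eventually.of_forall fun t ht => ?_
      have ht0 : 0 ≤ t := ht.1.le
      rw [(hgd t).deriv, Real.norm_eq_abs, abs_mul, mul_comm]
      refine mul_le_mul (hC t) ?_ (abs_nonneg _) ((abs_nonneg _).trans (hC 0))
      refine (abs_sub _ _).trans (le_of_eq ?_)
      rw [abs_of_nonneg (by positivity), abs_of_nonneg (by positivity)]
    · apply Continuous.intervalIntegrable
      fun_prop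

/-- The limit `R → ∞` of the previous estimate: the boundary term disappears, and the two Gamma
integrals bounding the derivative of the weight contribute at most `n! / β ^ n` each. -/
lemma abs_integral_mul_weight_le {C K β : ℝ} {F : ℝ → ℝ} (n : ℕ) (hβ : 0 < β)
    (hF : Measurable F) (hK : ∀ t, |F t| ≤ K)
    (hC : ∀ t, |∫ s in (0:ℝ)..t, F s| ≤ C) :
    |∫ t in Set.Ioi (0:ℝ), F t * (t ^ n * Real.exp (-β * t))| ≤
      C * (2 * (n.factorial / β ^ n)) := by
  have hFi : ∀ a b, IntervalIntegrable F volume a b := fun a b =>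
    intervalIntegrable_const (c := K) |>.mono_fun' hF.aestronglyMeasurable
      (Eventually.of_forall hK)
  have hC0 : 0 ≤ C := (abs_nonneg _).trans (hC 0)
  have hint : IntegrableOn (fun t => F t * (t ^ n * Real.exp (-β * t))) (Set.Ioi 0) :=
    (integrableOn_pow_mul_exp n hβ).bdd_mul hF.aestronglyMeasurable (Eventually.of_forall hK)
  have hint2 : IntegrableOn (fun t : ℝ => C * (n * (t ^ (n - 1) * Real.exp (-β * t)) +
        β * (t ^ n * Real.exp (-β * t)))) (Set.Ioi 0) :=
    (((integrableOn_pow_mul_exp (n - 1) hβ).const_mul _).add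
      ((integrableOn_pow_mul_exp n hβ).const_mul _)).const_mul _
  have hl := (intervalIntegral_tendsto_integral_Ioi 0 hint tendsto_id).abs
  have hr := intervalIntegral_tendsto_integral_Ioi 0 hint2 tendsto_id
  have hz : Tendsto (fun R : ℝ => C * (R ^ n * Real.exp (-β * R))) atTop (nhds 0) := by
    have := (tendsto_rpow_mul_exp_neg_mul_atTop_nhds_zero n β hβ).const_mul C
    simpa using this
  have hle := le_of_tendsto_of_tendsto hl (hz.add hr)
    ((eventually_ge_atTop 0).mono fun R hR => abs_intervalIntegral_mul_weight_le n hβ hFi hC hR)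
  refine hle.trans ?_
  rw [zero_add, integral_const_mul, integral_add
    ((integrableOn_pow_mul_exp (n - 1) hβ).const_mul _)
    ((integrableOn_pow_mul_exp n hβ).const_mul _), integral_const_mul, integral_const_mul,
    integral_pow_mul_exp _ hβ, integral_pow_mul_exp _ hβ]
  refine mul_le_mul_of_nonneg_left ?_ hC0
  have e2 : β * (n.factorial / β ^ (n + 1)) = n.factorial / β ^ n := by
    field_simp
    ring
  -- For `n = 0` the truncated exponent `n - 1` is harmless, because its coefficient `n` vanishes.
  have e1 : (n:ℝ) * ((n - 1).factorial / β ^ (n - 1 + 1)) ≤ n.factorial / β ^ n := by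
    rcases n with _ | m
    · simp
    · rw [Nat.add_sub_cancel, Nat.factorial_succ]
      push_cast
      rw [mul_div_assoc]
  linarith

theorem stmt_8 (T M : ℝ) (n : ℕ) (Q : ℝ → ℝ)
    (hT : 0 < T) (hM : 0 < M)
    (hmeas : Measurable Q)
    (hbound : ∀ t : ℝ, 0 ≤ Q t ∧ Q t ≤ M)
    (hper : ∀ t : ℝ, Q (t + T) = Q t)
    (havg : (1 / T) * ∫ t in (0:ℝ)..T, Q t = 1) :
    Tendsto
      (fun β : ℝ => (β ^ (n + 1) / (n.factorial : ℝ)) *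
        ∫ t in Set.Ioi (0:ℝ), t ^ n * Q t * Real.exp (-β * t))
      (nhdsWithin 0 (Set.Ioi 0)) (nhds 1) := by
  set F : ℝ → ℝ := fun t => Q t - 1 with hFdef
  have hFm : Measurable F := hmeas.sub_const 1
  have hK : ∀ t, |F t| ≤ M + 1 := fun t => by
    rw [abs_le]
    constructor <;> simp only [hFdef] <;> linarith [(hbound t).1, (hbound t).2]
  have hQi : ∀ a b, IntervalIntegrable Q volume a b := fun a b =>
    intervalIntegrable_const (c := M) |>.mono_fun' hmeas.aestronglyMeasurable
      (Eventually.of_forall fun t => by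
        simpa [abs_of_nonneg (hbound t).1] using (hbound t).2)
  have hFi : ∀ a b, IntervalIntegrable F volume a b := fun a b =>
    (hQi a b).sub intervalIntegrable_const
  have h0 : ∫ t in (0:ℝ)..T, F t = 0 := by
    have hQT : ∫ t in (0:ℝ)..T, Q t = T := by
      field_simp at havg
      exact havg
    simp only [hFdef]
    rw [intervalIntegral.integral_sub (hQi _ _) intervalIntegrable_const, hQT]
    simp
  have hFper : Function.Periodic F T := fun t => by simp only [hFdef, hper]
  have hC := abs_primitive_le hT hFi hK hFper h0
  set C := (M + 1) * T
  have hkey : ∀ β : ℝ, 0 < β → |(β ^ (n + 1) / (n.factorial : ℝ)) *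
        (∫ t in Set.Ioi (0:ℝ), t ^ n * Q t * Real.exp (-β * t)) - 1| ≤ 2 * C * β := by
    intro β hβ
    have hint : IntegrableOn (fun t => F t * (t ^ n * Real.exp (-β * t))) (Set.Ioi 0) :=
      (integrableOn_pow_mul_exp n hβ).bdd_mul hFm.aestronglyMeasurable (Eventually.of_forall hK)
    have hsplit : ∫ t in Set.Ioi (0:ℝ), t ^ n * Q t * Real.exp (-β * t) =
        n.factorial / β ^ (n + 1) + ∫ t in Set.Ioi (0:ℝ), F t * (t ^ n * Real.exp (-β * t)) := by
      rw [← integral_pow_mul_exp n hβ, ← integral_add (integrableOn_pow_mul_exp n hβ) hint]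
      refine integral_congr_ae (Eventually.of_forall fun t => ?_)
      simp only [hFdef]
      ring
    have hfac : (0:ℝ) < n.factorial := by positivity
    have hb := abs_integral_mul_weight_le n hβ hFm hK hC
    have h1 : (β ^ (n + 1) / (n.factorial : ℝ)) * (n.factorial / β ^ (n + 1)) = 1 := by
      field_simp
    rw [hsplit, mul_add, h1, add_sub_cancel_left, abs_mul,
      abs_of_pos (show 0 < β ^ (n + 1) / (n.factorial : ℝ) by positivity)]
    refine (mul_le_mul_of_nonneg_left hb (by positivity)).trans (le_of_eq ?_)
    field_simp
    ring
  rw [tendsto_iff_dist_tendsto_zero]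
  have hlim : Tendsto (fun β : ℝ => 2 * C * β) (nhdsWithin 0 (Set.Ioi 0)) (nhds 0) := by
    have : Tendsto (fun β : ℝ => 2 * C * β) (nhds 0) (nhds (2 * C * 0)) :=
      tendsto_id.const_mul _
    rw [mul_zero] at this
    exact this.mono_left nhdsWithin_le_nhds
  refine squeeze_zero' (Eventually.of_forall fun _ => dist_nonneg) ?_ hlim
  filter_upwards [self_mem_nhdsWithin] with β hβ
  exact hkey β hβ
end

section
/- Let A ∈ ℝ with 0 < |A| < √(4/27), ω > 0 and T = 2π/ω. Then there exists a differentiable function x : ℝ → ℝ with x'(t) = −x(t)³ + x(t) + A·sin(ω·t) for all t, x(t + T) = x(t) for all t, and |x(t)| < 1/√3 for all t; i.e. the deterministic system has a periodic orbit oscillating around the saddle. -/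
open Real

/-!
With `f = x ^ 3 - A sin (ω ·)` the equation reads `x' = x - f`, and its bounded solutions are
exactly the fixed points of
`x ↦ (t ↦ ∫_t^∞ exp (t - s) * (x s ^ 3 - A sin (ω s)) ds)`.
Since `|A| < √(4/27) = max (y - y ^ 3)` on `[0, 1/√3]`, there is `0 ≤ c < 1/√3` with
`c - c ^ 3 = |A|`. The kernel `exp (t - s)` has mass one on `(t, ∞)`, so the sup-norm ball of
radius `c` is mapped into itself (`c ^ 3 + |A| = c`), with Lipschitz constant `3 c ^ 2 < 1`.
The operator commutes with translations, so it also preserves `T`-periodicity, and the contraction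
principle on the `T`-periodic bounded continuous functions of norm at most `c` gives the orbit.
Integrating from `+∞` is what makes the orbit of an *unstable* equation come out as a contraction.
-/

open MeasureTheory Set BoundedContinuousFunction

/-- The operator `f ↦ (t ↦ ∫_t^∞ exp (t - s) f s ds)`, which sends a bounded continuous `f` to the
bounded solution of `y' = y - f`. -/
noncomputable def backwardSolution (f : ℝ → ℝ) (t : ℝ) : ℝ :=
  exp t * ∫ s in Ioi t, exp (-s) * f s

lemma integrableOn_exp_neg_mul {f : ℝ → ℝ} (hf : Continuous f) {M : ℝ} (hM : ∀ t, |f t| ≤ M)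
    (t : ℝ) : IntegrableOn (fun s => exp (-s) * f s) (Ioi t) :=
  (integrableOn_exp_neg_Ioi t).mul_bdd hf.aestronglyMeasurable
    (Filter.Eventually.of_forall fun s => by simpa using hM s)

lemma abs_backwardSolution_le {f : ℝ → ℝ} {M : ℝ} (hM : ∀ t, |f t| ≤ M) (t : ℝ) :
    |backwardSolution f t| ≤ M := by
  have h : ‖∫ s in Ioi t, exp (-s) * f s‖ ≤ ∫ s in Ioi t, exp (-s) * M := by
    refine norm_integral_le_of_norm_le ((integrableOn_exp_neg_Ioi t).mul_const M)
      (Filter.Eventually.of_forall fun s => ?_)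
    rw [norm_mul, Real.norm_eq_abs, abs_exp]
    exact mul_le_mul_of_nonneg_left (hM s) (exp_pos _).le
  rw [integral_mul_const, integral_exp_neg_Ioi, Real.norm_eq_abs] at h
  rw [backwardSolution, abs_mul, abs_exp]
  calc exp t * |∫ s in Ioi t, exp (-s) * f s| ≤ exp t * (exp (-t) * M) :=
        mul_le_mul_of_nonneg_left h (exp_pos _).le
    _ = M := by rw [← mul_assoc, ← exp_add]; simp

lemma hasDerivAt_backwardSolution {f : ℝ → ℝ} (hf : Continuous f) {M : ℝ} (hM : ∀ t, |f t| ≤ M)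
    (t : ℝ) : HasDerivAt (backwardSolution f) (backwardSolution f t - f t) t := by
  have hc : Continuous fun s => exp (-s) * f s := by fun_prop
  have heq : ∀ u, ∫ s in Ioi u, exp (-s) * f s =
      (∫ s in Ioi 0, exp (-s) * f s) - ∫ s in (0 : ℝ)..u, exp (-s) * f s := fun u => by
    rw [← intervalIntegral.integral_Ioi_sub_Ioi' (integrableOn_exp_neg_mul hf hM 0)
      (integrableOn_exp_neg_mul hf hM u)]
    ring
  have hd : HasDerivAt (fun u => ∫ s in Ioi u, exp (-s) * f s) (-(exp (-t) * f t)) t := by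
    rw [funext heq]
    exact (hc.integral_hasStrictDerivAt 0 t).hasDerivAt.const_sub _
  have he : exp t * exp (-t) = 1 := by rw [← exp_add]; simp
  refine ((hasDerivAt_exp t).mul hd).congr_deriv ?_
  rw [backwardSolution]
  linear_combination (-f t) * he

lemma backwardSolution_sub {f g : ℝ → ℝ} (hf : Continuous f) (hg : Continuous g) {M N : ℝ}
    (hM : ∀ t, |f t| ≤ M) (hN : ∀ t, |g t| ≤ N) (t : ℝ) :
    backwardSolution f t - backwardSolution g t = backwardSolution (fun s => f s - g s) t := by
  simp only [backwardSolution, mul_sub]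
  rw [integral_sub (integrableOn_exp_neg_mul hf hM t) (integrableOn_exp_neg_mul hg hN t), mul_sub]

lemma backwardSolution_periodic {f : ℝ → ℝ} {T : ℝ} (hT : ∀ t, f (t + T) = f t) (t : ℝ) :
    backwardSolution f (t + T) = backwardSolution f t := by
  have h := (measurePreserving_add_right (volume : Measure ℝ) T).setIntegral_preimage_emb
    (measurableEmbedding_addRight T) (fun s => exp (-s) * f s) (Ioi (t + T))
  have hs : (fun s : ℝ => s + T) ⁻¹' Ioi (t + T) = Ioi t := by ext; simp
  rw [hs] at h
  rw [backwardSolution, backwardSolution, ← h, ← integral_const_mul, ← integral_const_mul]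
  refine integral_congr_ae (Filter.Eventually.of_forall fun s => ?_)
  simp only [hT, ← mul_assoc, ← exp_add]
  ring_nf

/-- The fixed point argument for a general forcing `h`, under the trapping condition
`c ^ 3 + |h| ≤ c` and the contraction condition `3 c ^ 2 < 1`. -/
lemma exists_periodic_solution {h : ℝ → ℝ} (hh : Continuous h) {T : ℝ}
    (hT : ∀ t, h (t + T) = h t) {c : ℝ} (hc0 : 0 ≤ c) (hc1 : 3 * c ^ 2 < 1)
    (hc : ∀ t, c ^ 3 + |h t| ≤ c) :
    ∃ x : ℝ → ℝ, (∀ t, HasDerivAt x (-(x t) ^ 3 + x t + h t) t) ∧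
      (∀ t, x (t + T) = x t) ∧ ∀ t, |x t| ≤ c := by
  let S : Set (ℝ →ᵇ ℝ) := {x | (∀ t, |x t| ≤ c) ∧ ∀ t, x (t + T) = x t}
  have hS : IsClosed S := by
    have hSeq : S = (⋂ t, {x | |x t| ≤ c}) ∩ ⋂ t, {x | x (t + T) = x t} := by
      ext x
      simp [S]
    rw [hSeq]
    exact (isClosed_iInter fun t => isClosed_le (continuous_eval_const t).abs continuous_const).inter
      (isClosed_iInter fun t => isClosed_eq (continuous_eval_const _) (continuous_eval_const _))
  have : CompleteSpace S := hS.completeSpace_coe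
  have : Nonempty S := ⟨⟨0, by simpa using hc0, by simp⟩⟩
  have hcont : ∀ x : S, Continuous fun s => x.1 s ^ 3 - h s := fun x => by
    have := x.1.continuous
    fun_prop
  have hbd : ∀ (x : S) t, |x.1 t ^ 3 - h t| ≤ c := fun x t => by
    refine (abs_sub _ _).trans (le_trans ?_ (hc t))
    rw [abs_pow]
    gcongr
    exact x.2.1 t
  let Φ : S → S := fun x =>
    ⟨ofNormedAddCommGroup (backwardSolution fun s => x.1 s ^ 3 - h s)
      (continuous_iff_continuousAt.2 fun t =>
        (hasDerivAt_backwardSolution (hcont x) (hbd x) t).continuousAt)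
      c (abs_backwardSolution_le (hbd x)),
      abs_backwardSolution_le (hbd x),
      backwardSolution_periodic fun t => by simp only [x.2.2 t, hT t]⟩
  have hΦ : ContractingWith (⟨3 * c ^ 2, by positivity⟩ : NNReal) Φ := by
    refine ⟨by exact_mod_cast hc1, LipschitzWith.of_dist_le_mul fun x y => ?_⟩
    refine (BoundedContinuousFunction.dist_le (mul_nonneg (NNReal.coe_nonneg _) dist_nonneg)).2 fun t => ?_
    change |backwardSolution _ t - backwardSolution _ t| ≤ 3 * c ^ 2 * dist x.1 y.1
    rw [backwardSolution_sub (hcont x) (hcont y) (hbd x) (hbd y)]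
    refine abs_backwardSolution_le (fun s => ?_) t
    have hxy : |x.1 s - y.1 s| ≤ dist x.1 y.1 := by
      rw [← Real.dist_eq]
      exact dist_coe_le_dist s
    have hx := abs_le.1 (x.2.1 s)
    have hy := abs_le.1 (y.2.1 s)
    have hq : |x.1 s ^ 2 + x.1 s * y.1 s + y.1 s ^ 2| ≤ 3 * c ^ 2 := by
      rw [abs_le]
      constructor <;> nlinarith
    have hfac : x.1 s ^ 3 - h s - (y.1 s ^ 3 - h s) =
        (x.1 s ^ 2 + x.1 s * y.1 s + y.1 s ^ 2) * (x.1 s - y.1 s) := by ring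
    rw [hfac, abs_mul]
    exact mul_le_mul hq hxy (abs_nonneg _) (by positivity)
  let x := hΦ.fixedPoint Φ
  have hx : ⇑x.1 = backwardSolution fun s => x.1 s ^ 3 - h s :=
    (congrArg (fun z : S => ⇑z.1) hΦ.fixedPoint_isFixedPt).symm
  refine ⟨x.1, fun t => ?_, x.2.2, x.2.1⟩
  have hd := hasDerivAt_backwardSolution (hcont x) (hbd x) t
  rw [← hx] at hd
  exact hd.congr_deriv (by ring)

/-- Below the critical amplitude, the radius of the trapping ball lies strictly inside the interval
`|y| < 1/√3` on which `y - y ^ 3` is increasing. -/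
lemma exists_trapping_radius {a : ℝ} (ha : 0 ≤ a) (ha' : a < √(4 / 27)) :
    ∃ c, 0 ≤ c ∧ c < 1 / √3 ∧ c - c ^ 3 = a := by
  have h3 : √3 ^ 2 = 3 := Real.sq_sqrt (by norm_num)
  have h3' : 0 < √3 := by positivity
  have hcrit : 1 / √3 - (1 / √3) ^ 3 = √(4 / 27) := by
    have hinv : (1 / √3) ^ 2 = 1 / 3 := by rw [div_pow, h3, one_pow]
    have hval : 1 / √3 - (1 / √3) ^ 3 = 2 / 3 * (1 / √3) := by
      linear_combination (-(1 / √3)) * hinv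
    rw [hval]
    symm
    rw [Real.sqrt_eq_iff_mul_self_eq_of_pos (by positivity)]
    linear_combination (4 / 9) * hinv
  obtain ⟨c, ⟨hc0, hc1⟩, hc⟩ := intermediate_value_Icc (f := fun y : ℝ => y - y ^ 3)
    (a := 0) (b := 1 / √3) (by positivity) (by fun_prop)
    (show a ∈ Icc _ _ from ⟨by simpa using ha, by simpa only [hcrit] using ha'.le⟩)
  refine ⟨c, hc0, lt_of_le_of_ne hc1 ?_, hc⟩
  rintro rfl
  exact ha'.ne (hc.symm.trans hcrit)

theorem stmt_12 (A ω T : ℝ) (hA : A ≠ 0) (hA' : |A| < Real.sqrt (4 / 27))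
    (hω : 0 < ω) (hT : T = 2 * Real.pi / ω) :
    ∃ x : ℝ → ℝ, Differentiable ℝ x ∧
      (∀ t : ℝ, deriv x t = -(x t) ^ 3 + x t + A * Real.sin (ω * t)) ∧
      (∀ t : ℝ, x (t + T) = x t) ∧
      (∀ t : ℝ, |x t| < 1 / Real.sqrt 3) := by
  obtain ⟨c, hc0, hc1, hc⟩ := exists_trapping_radius (abs_nonneg A) hA'
  have hc2 : 3 * c ^ 2 < 1 := by
    have h := pow_lt_pow_left₀ hc1 hc0 two_ne_zero
    rw [div_pow, Real.sq_sqrt (by norm_num)] at h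
    linarith
  have hper : ∀ t, A * sin (ω * (t + T)) = A * sin (ω * t) := fun t => by
    have : ω * (t + T) = ω * t + 2 * π := by rw [hT]; field_simp
    rw [this, sin_add_two_pi]
  have hbd : ∀ t, c ^ 3 + |A * sin (ω * t)| ≤ c := fun t => by
    have h := mul_le_mul_of_nonneg_left (abs_sin_le_one (ω * t)) (abs_nonneg A)
    rw [abs_mul]
    linarith
  obtain ⟨x, hx, hxT, hxc⟩ := exists_periodic_solution (by fun_prop) hper hc0 hc2 hbd
  exact ⟨x, fun t => (hx t).differentiableAt, fun t => (hx t).deriv, hxT,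
    fun t => (hxc t).trans_lt hc1⟩
end

section
/- Let A ∈ ℝ with 0 < |A| < √(4/27), ω > 0 and T = 2π/ω. If x, y : ℝ → ℝ are differentiable, satisfy x'(t) = −x(t)³ + x(t) + A·sin(ω·t) and y'(t) = −y(t)³ + y(t) + A·sin(ω·t) for all t, are T-periodic, and satisfy |x(t)| ≤ 1/√3 and |y(t)| ≤ 1/√3 for all t, then x = y; i.e. the periodic orbit staying between −1/√3 and 1/√3 is unique. -/
/-!
Let `E = (x - y)²`. Subtracting the two equations gives `E' = 2 E (1 - (x² + x y + y²))`, and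
`x², y² ≤ 1/3` gives `(x - y)² = 3 (x² + y²) - 2 (x² + x y + y²) ≤ 2 (1 - (x² + x y + y²))`.
Hence `E' ≥ E² ≥ 0`, so `E` is monotone. By periodicity and Rolle's theorem, `E' = 0` at some point
`c` of `(t, t + T)`; there `E(c) = 0`, and therefore `0 ≤ E(t) ≤ E(c) = 0`.
-/

open Real

theorem stmt_13 (A ω T : ℝ) (hA : A ≠ 0) (hA' : |A| < Real.sqrt (4 / 27))
    (hω : 0 < ω) (hT : T = 2 * Real.pi / ω)
    (x y : ℝ → ℝ) (hx : Differentiable ℝ x) (hy : Differentiable ℝ y)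
    (hx' : ∀ t : ℝ, deriv x t = -(x t) ^ 3 + x t + A * Real.sin (ω * t))
    (hy' : ∀ t : ℝ, deriv y t = -(y t) ^ 3 + y t + A * Real.sin (ω * t))
    (hxper : ∀ t : ℝ, x (t + T) = x t) (hyper : ∀ t : ℝ, y (t + T) = y t)
    (hxb : ∀ t : ℝ, |x t| ≤ 1 / Real.sqrt 3) (hyb : ∀ t : ℝ, |y t| ≤ 1 / Real.sqrt 3) :
    x = y := by
  have hTpos : 0 < T := by rw [hT]; positivity
  have hsq : ∀ a : ℝ, |a| ≤ 1 / Real.sqrt 3 → a ^ 2 ≤ 1 / 3 := by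
    intro a ha
    have h := pow_le_pow_left₀ (abs_nonneg a) ha 2
    rwa [sq_abs, div_pow, one_pow, Real.sq_sqrt (by norm_num)] at h
  set E : ℝ → ℝ := fun t => (x t - y t) ^ 2 with hE
  have hd : ∀ t, HasDerivAt E
      (2 * (x t - y t) ^ 2 * (1 - (x t ^ 2 + x t * y t + y t ^ 2))) t := by
    intro t
    have h := ((hx t).hasDerivAt.sub (hy t).hasDerivAt).pow 2
    rw [hx', hy'] at h
    refine h.congr_deriv ?_
    simp only [Pi.sub_apply]
    push_cast
    ring
  have hlow : ∀ t, (E t) ^ 2 ≤ deriv E t := by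
    intro t
    rw [(hd t).deriv]
    have h1 := hsq _ (hxb t)
    have h2 := hsq _ (hyb t)
    have h3 : (x t - y t) ^ 2 ≤ 2 * (1 - (x t ^ 2 + x t * y t + y t ^ 2)) := by nlinarith
    have h4 := mul_le_mul_of_nonneg_left h3 (sq_nonneg (x t - y t))
    simp only [hE]
    linarith
  have hmono : Monotone E :=
    monotone_of_deriv_nonneg (fun t => (hd t).differentiableAt)
      (fun t => (sq_nonneg _).trans (hlow t))
  funext t
  obtain ⟨c, hc, hc0⟩ := exists_deriv_eq_zero (f := E) (lt_add_of_pos_right t hTpos)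
    (fun s _ => (hd s).continuousAt.continuousWithinAt) (by simp only [hE, hxper, hyper])
  have hEc : E c = 0 := by
    have h := hlow c
    rw [hc0] at h
    exact pow_eq_zero_iff (two_ne_zero) |>.mp (le_antisymm h (sq_nonneg _))
  have hEt : (x t - y t) ^ 2 ≤ 0 := (hmono hc.1.le).trans hEc.le
  exact sub_eq_zero.mp (pow_eq_zero_iff two_ne_zero |>.mp (le_antisymm hEt (sq_nonneg _)))
end

section
/- Let A ∈ ℝ with 0 < |A| < √(4/27), ω > 0 and T = 2π/ω. Then there exist differentiable T-periodic functions x⁻, x⁺ : ℝ → ℝ solving x'(t) = −x(t)³ + x(t) + A·sin(ω·t) for all t, such that x⁻(t) < −1/√3 and x⁺(t) > 1/√3 for all t; i.e. the deterministic system has a stable periodic orbit in each potential well. -/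
open Real

/-!
Bounded solutions of `x' = -x³ + x + A sin (ω t)` are the bounded solutions of
`x' = -11 x + φ` with `φ(t) = 12 x - x³ + A sin (ω t)`, and the only bounded solution of the latter
linear equation is `x(t) = ∫_{-∞}^t e^{-11 (t - s)} φ(s) ds` (`relax 11 φ`). So a periodic orbit is
a fixed point of `x ↦ relax 11 φ`.

Since `|A| < √(4/27) = max_{x ≥ 0} (x - x³)`, the maximum being attained at `1/√3`, there is
`c ∈ (1/√3, 1)` with `|A| ≤ c - c³`. On the band `[c, 2]` the map `x ↦ 12 x - x³` is increasing
with derivative at most `12 - 3 c² < 11`. Monotonicity and the signs of the vector field at `c` and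
at `2` make the operator preserve the set of `T`-periodic continuous functions with values in
`[c, 2]`; the derivative bound makes it a contraction there in the sup norm. The fixed point is
the orbit in the right well, and the orbit in the left well is minus the right orbit for `-A`.
-/

open Set MeasureTheory Filter Topology
open scoped BoundedContinuousFunction NNReal

/-- The function `t ↦ ∫_{-∞}^t e^{-k (t - s)} φ(s) ds`, which for `0 < k` and bounded continuous `φ`
is the bounded solution of `x' = -k x + φ`. -/
noncomputable def relax (k : ℝ) (φ : ℝ → ℝ) (t : ℝ) : ℝ :=
  Real.exp (-(k * t)) * ∫ s in Iic t, Real.exp (k * s) * φ s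

lemma relax_integrableOn {k : ℝ} (hk : 0 < k) {φ : ℝ → ℝ} (hφ : Continuous φ) {C : ℝ}
    (hC : ∀ t, |φ t| ≤ C) (t : ℝ) :
    IntegrableOn (fun s => Real.exp (k * s) * φ s) (Iic t) := by
  refine Integrable.mul_bdd (c := C) (integrableOn_exp_mul_Iic hk t)
    hφ.aestronglyMeasurable ?_
  exact Eventually.of_forall hC

lemma relax_hasDerivAt {k : ℝ} (hk : 0 < k) {φ : ℝ → ℝ} (hφ : Continuous φ) {C : ℝ}
    (hC : ∀ t, |φ t| ≤ C) (t : ℝ) :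
    HasDerivAt (relax k φ) (φ t - k * relax k φ t) t := by
  have hint := relax_integrableOn hk hφ hC
  have hcont : Continuous fun s => Real.exp (k * s) * φ s := by fun_prop
  have h1 : HasDerivAt (fun u => ∫ s in Iic u, Real.exp (k * s) * φ s)
      (Real.exp (k * t) * φ t) t := by
    have h := (hcont.integral_hasStrictDerivAt 0 t).hasDerivAt.const_add
      (∫ s in Iic 0, Real.exp (k * s) * φ s)
    refine h.congr_of_eventuallyEq (Eventually.of_forall fun u => ?_)
    change _ = _ + _
    rw [← intervalIntegral.integral_Iic_sub_Iic (hint 0) (hint u)]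
    ring
  have h2 : HasDerivAt (fun u => Real.exp (-(k * u))) (Real.exp (-(k * t)) * (-k)) t := by
    have h3 : HasDerivAt (fun u => -(k * u)) (-k) t := by
      simpa using ((hasDerivAt_id t).const_mul k).fun_neg
    exact h3.exp
  refine (h2.mul h1).congr_deriv ?_
  have he : Real.exp (-(k * t)) * Real.exp (k * t) = 1 := by
    rw [← Real.exp_add]; simp
  unfold relax
  linear_combination φ t * he

lemma relax_const {k : ℝ} (hk : 0 < k) (a t : ℝ) : relax k (fun _ => a) t = a / k := by
  have he : Real.exp (-(k * t)) * Real.exp (k * t) = 1 := by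
    rw [← Real.exp_add]; simp
  unfold relax
  rw [integral_mul_const, integral_exp_mul_Iic hk]
  field_simp
  linear_combination a * he

lemma relax_mono {k : ℝ} (hk : 0 < k) {φ ψ : ℝ → ℝ} (hφ : Continuous φ) (hψ : Continuous ψ)
    {C D : ℝ} (hC : ∀ t, |φ t| ≤ C) (hD : ∀ t, |ψ t| ≤ D) (h : ∀ t, φ t ≤ ψ t) (t : ℝ) :
    relax k φ t ≤ relax k ψ t := by
  unfold relax
  refine mul_le_mul_of_nonneg_left ?_ (Real.exp_pos _).le
  refine setIntegral_mono (relax_integrableOn hk hφ hC t) (relax_integrableOn hk hψ hD t) ?_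
  intro s
  exact mul_le_mul_of_nonneg_left (h s) (Real.exp_pos _).le

lemma relax_sub {k : ℝ} (hk : 0 < k) {φ ψ : ℝ → ℝ} (hφ : Continuous φ) (hψ : Continuous ψ)
    {C D : ℝ} (hC : ∀ t, |φ t| ≤ C) (hD : ∀ t, |ψ t| ≤ D) (t : ℝ) :
    relax k (fun s => φ s - ψ s) t = relax k φ t - relax k ψ t := by
  unfold relax
  rw [← mul_sub, ← integral_sub (relax_integrableOn hk hφ hC t) (relax_integrableOn hk hψ hD t)]
  simp only [mul_sub]

lemma relax_abs_le {k : ℝ} (hk : 0 < k) {φ : ℝ → ℝ} (hφ : Continuous φ) {C : ℝ}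
    (hC : ∀ t, |φ t| ≤ C) (t : ℝ) : |relax k φ t| ≤ C / k := by
  rw [abs_le]
  constructor
  · rw [← neg_div, ← relax_const hk (-C) t]
    exact relax_mono hk continuous_const hφ (fun _ => le_rfl) hC (fun s => (abs_le.1 (hC s)).1) t
  · rw [← relax_const hk C t]
    exact relax_mono hk hφ continuous_const hC (fun _ => le_rfl) (fun s => (abs_le.1 (hC s)).2) t

lemma relax_periodic (k : ℝ) {φ : ℝ → ℝ} {T : ℝ} (hT : ∀ t, φ (t + T) = φ t) (t : ℝ) :
    relax k φ (t + T) = relax k φ t := by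
  have h := (measurePreserving_add_right (volume : Measure ℝ) T).setIntegral_preimage_emb
    (measurableEmbedding_addRight T) (fun s => Real.exp (k * s) * φ s) (Iic (t + T))
  have hpre : (fun s : ℝ => s + T) ⁻¹' Iic (t + T) = Iic t := by
    ext s; simp
  have hs : ∀ s, Real.exp (k * (s + T)) * φ (s + T)
      = Real.exp (k * T) * (Real.exp (k * s) * φ s) := by
    intro s
    rw [hT, mul_add, Real.exp_add]; ring
  rw [hpre] at h
  simp only [hs] at h
  rw [integral_const_mul] at h
  unfold relax
  rw [← h, ← mul_assoc, ← Real.exp_add]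
  congr 2
  ring

/-- The constant `c` is a lower fence for the right well: at `x = c` the vector field
`-x³ + x + A sin (ω t)` is nonnegative at all times. Its existence is where the bound on `|A|` is
used, `√(4/27)` being the value of `x - x³` at `x = 1/√3`. -/
lemma exists_fence {A : ℝ} (hA : |A| < Real.sqrt (4 / 27)) :
    ∃ c : ℝ, 1 / Real.sqrt 3 < c ∧ c < 1 ∧ 1 / 3 < c ^ 2 ∧ |A| ≤ c - c ^ 3 := by
  set u : ℝ := 1 / Real.sqrt 3 with hu
  have hu0 : 0 < u := by positivity
  have hu2 : u ^ 2 = 1 / 3 := by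
    rw [hu, div_pow, Real.sq_sqrt (by norm_num)]; norm_num
  have hu1 : u < 1 := by nlinarith
  have hval : u - u ^ 3 = Real.sqrt (4 / 27) := by
    symm
    rw [Real.sqrt_eq_iff_mul_self_eq (by norm_num)]
    · have : u ^ 3 = u / 3 := by rw [pow_succ, hu2]; ring
      rw [this]; nlinarith
    · have : u ^ 3 = u / 3 := by rw [pow_succ, hu2]; ring
      rw [this]; linarith
  have hc : ContinuousAt (fun c : ℝ => c - c ^ 3) u := by fun_prop
  have h1 : ∀ᶠ c in 𝓝[>] u, |A| < c - c ^ 3 :=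
    (hc.tendsto.eventually (lt_mem_nhds (by rw [hval]; exact hA))).filter_mono
      nhdsWithin_le_nhds
  have h2 : ∀ᶠ c in 𝓝[>] u, c ∈ Ioo u 1 := Ioo_mem_nhdsGT hu1
  obtain ⟨c, hcA, hcu, hc1⟩ := (h1.and h2).exists
  exact ⟨c, hcu, hc1, by nlinarith, hcA.le⟩

/-- The orbit in the right well, for either sign of `A`. -/
lemma exists_right_orbit (A ω T : ℝ) (hA : |A| < Real.sqrt (4 / 27))
    (hT : ∀ t, Real.sin (ω * (t + T)) = Real.sin (ω * t)) :
    ∃ x : ℝ → ℝ, (∀ t, HasDerivAt x (-(x t) ^ 3 + x t + A * Real.sin (ω * t)) t) ∧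
      (∀ t, x (t + T) = x t) ∧ ∀ t, 1 / Real.sqrt 3 < x t := by
  obtain ⟨c, hcu, hc1, hc2, hcA⟩ := exists_fence hA
  have hc0 : 0 < c := lt_trans (by positivity) hcu
  have hsin : ∀ t, |A * Real.sin (ω * t)| ≤ c - c ^ 3 := fun t => by
    rw [abs_mul]
    calc |A| * |Real.sin (ω * t)| ≤ |A| * 1 :=
          mul_le_mul_of_nonneg_left (Real.abs_sin_le_one _) (abs_nonneg _)
      _ ≤ c - c ^ 3 := by linarith
  let S : Set (ℝ →ᵇ ℝ) := {f | (∀ t, f t ∈ Icc c 2) ∧ ∀ t, f (t + T) = f t}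
  have hSc : IsClosed S := by
    have hev : ∀ t, Continuous fun f : ℝ →ᵇ ℝ => f t := fun t =>
      continuous_eval_const t
    have hS : S = (⋂ t, {f | f t ∈ Icc c 2}) ∩ ⋂ t, {f | f (t + T) = f t} := by
      ext f
      simp only [S, mem_inter_iff, mem_iInter, mem_ofPred_eq]
    rw [hS]
    exact (isClosed_iInter fun t => isClosed_Icc.preimage (hev t)).inter
      (isClosed_iInter fun t => isClosed_eq (hev _) (hev _))
  let φ : (ℝ → ℝ) → ℝ → ℝ := fun f t => 12 * f t - f t ^ 3 + A * Real.sin (ω * t)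
  have hφc : ∀ f : ℝ → ℝ, Continuous f → Continuous (φ f) := fun f hf => by
    simp only [φ]; fun_prop
  -- `12 y - y ^ 3` is increasing in `y` on `[c, 2]`, and its values at `c` and `2` are
  -- `11 c + (c - c ^ 3)` and `11 * 2 - 6`; the forcing has size at most `c - c ^ 3 < 6`.
  have hφl : ∀ f : ℝ → ℝ, (∀ t, f t ∈ Icc c 2) → ∀ t, 11 * c ≤ φ f t := by
    intro f hf t
    obtain ⟨h1, h2⟩ := hf t
    have h3 := (abs_le.1 (hsin t)).1
    simp only [φ]
    have h4 : 0 ≤ (f t - c) * (12 - (f t ^ 2 + f t * c + c ^ 2)) :=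
      mul_nonneg (by linarith) (by nlinarith)
    nlinarith
  have hφu : ∀ f : ℝ → ℝ, (∀ t, f t ∈ Icc c 2) → ∀ t, φ f t ≤ 11 * 2 := by
    intro f hf t
    obtain ⟨h1, h2⟩ := hf t
    have h3 := (abs_le.1 (hsin t)).2
    simp only [φ]
    have h4 : 0 ≤ (2 - f t) * (12 - (f t ^ 2 + f t * 2 + 2 ^ 2)) :=
      mul_nonneg (by linarith) (by nlinarith)
    have h5 : 0 < c ^ 3 := by positivity
    nlinarith
  have hφb : ∀ f : ℝ → ℝ, (∀ t, f t ∈ Icc c 2) → ∀ t, |φ f t| ≤ 22 := by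
    intro f hf t
    have := hφl f hf t
    have := hφu f hf t
    rw [abs_le]; constructor <;> linarith
  have h11 : (0 : ℝ) < 11 := by norm_num
  have hband : ∀ f : ℝ → ℝ, Continuous f → (∀ t, f t ∈ Icc c 2) →
      ∀ t, relax 11 (φ f) t ∈ Icc c 2 := by
    intro f hf hfb t
    constructor
    · have h := relax_mono h11 continuous_const (hφc f hf) (fun _ => le_rfl) (hφb f hfb)
        (hφl f hfb) t
      rw [relax_const h11] at h
      linarith
    · have h := relax_mono h11 (hφc f hf) continuous_const (hφb f hfb) (fun _ => le_rfl)
        (hφu f hfb) t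
      rw [relax_const h11] at h
      linarith
  have hder : ∀ f : ℝ → ℝ, Continuous f → (∀ t, f t ∈ Icc c 2) → ∀ t,
      HasDerivAt (relax 11 (φ f)) (φ f t - 11 * relax 11 (φ f) t) t := fun f hf hfb =>
    relax_hasDerivAt h11 (hφc f hf) (hφb f hfb)
  let Φ : S → S := fun f =>
    ⟨BoundedContinuousFunction.ofNormedAddCommGroup (relax 11 (φ f.1))
      (continuous_iff_continuousAt.2 fun t =>
        (hder f.1 f.1.continuous f.2.1 t).continuousAt) (22 / 11)
      (relax_abs_le h11 (hφc f.1 f.1.continuous) (hφb f.1 f.2.1)),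
    hband f.1 f.1.continuous f.2.1,
    relax_periodic 11 fun t => by simp only [φ]; rw [f.2.2, hT]⟩
  have hΦ : ∀ (f : S) t, (Φ f).1 t = relax 11 (φ f.1) t := fun f t => rfl
  let q : ℝ≥0 := ⟨(12 - 3 * c ^ 2) / 11, by
    have : c ^ 2 < 1 := by nlinarith
    apply div_nonneg <;> linarith⟩
  have hq : (q : ℝ) = (12 - 3 * c ^ 2) / 11 := rfl
  have hcontr : ContractingWith q Φ := by
    refine ⟨?_, LipschitzWith.of_dist_le_mul fun f g => ?_⟩
    · rw [← NNReal.coe_lt_coe, hq, NNReal.coe_one, div_lt_one h11]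
      linarith
    · rw [Subtype.dist_eq, Subtype.dist_eq]
      refine (BoundedContinuousFunction.dist_le (mul_nonneg q.coe_nonneg dist_nonneg)).2 fun t => ?_
      have hf := hφc f.1 f.1.continuous
      have hg := hφc g.1 g.1.continuous
      have hfb := hφb f.1 f.2.1
      have hgb := hφb g.1 g.2.1
      rw [hΦ, hΦ, Real.dist_eq, ← relax_sub h11 hf hg hfb hgb]
      have hpt : ∀ s, |φ f.1 s - φ g.1 s| ≤ (12 - 3 * c ^ 2) * dist f.1 g.1 := by
        intro s
        have hd := BoundedContinuousFunction.dist_coe_le_dist (f := f.1) (g := g.1) s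
        rw [Real.dist_eq] at hd
        obtain ⟨hf1, hf2⟩ := f.2.1 s
        obtain ⟨hg1, hg2⟩ := g.2.1 s
        -- The first factor is the slope of a chord of `12 y - y ^ 3` over `[c, 2]`.
        have heq : φ f.1 s - φ g.1 s
            = (12 - (f.1 s ^ 2 + f.1 s * g.1 s + g.1 s ^ 2)) * (f.1 s - g.1 s) := by
          simp only [φ]; ring
        rw [heq, abs_mul, abs_of_nonneg (by nlinarith)]
        have hle : 12 - (f.1 s ^ 2 + f.1 s * g.1 s + g.1 s ^ 2) ≤ 12 - 3 * c ^ 2 := by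
          nlinarith
        exact mul_le_mul hle hd (abs_nonneg _) (by nlinarith)
      refine (relax_abs_le h11 (hf.sub hg) hpt t).trans (le_of_eq ?_)
      rw [hq]; ring
  have : CompleteSpace S := hSc.completeSpace_coe
  have : Nonempty S :=
    ⟨⟨BoundedContinuousFunction.const ℝ 2, fun t => ⟨by simp; linarith, by simp⟩,
      fun t => by simp⟩⟩
  let x : S := ContractingWith.fixedPoint Φ hcontr
  have hx : Φ x = x := hcontr.fixedPoint_isFixedPt
  have hxt : (relax 11 (φ x.1)) = x.1 := by
    funext t
    rw [← hΦ, hx]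
  refine ⟨x.1, fun t => ?_, x.2.2, fun t => lt_of_lt_of_le hcu (x.2.1 t).1⟩
  have h := hder x.1 x.1.continuous x.2.1 t
  rw [hxt] at h
  refine h.congr_deriv ?_
  simp only [φ]; ring

theorem stmt_14 (A ω T : ℝ) (hA : A ≠ 0) (hA' : |A| < Real.sqrt (4 / 27))
    (hω : 0 < ω) (hT : T = 2 * Real.pi / ω) :
    ∃ xm xp : ℝ → ℝ,
      Differentiable ℝ xm ∧ Differentiable ℝ xp ∧
      (∀ t : ℝ, deriv xm t = -(xm t) ^ 3 + xm t + A * Real.sin (ω * t)) ∧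
      (∀ t : ℝ, deriv xp t = -(xp t) ^ 3 + xp t + A * Real.sin (ω * t)) ∧
      (∀ t : ℝ, xm (t + T) = xm t) ∧ (∀ t : ℝ, xp (t + T) = xp t) ∧
      (∀ t : ℝ, xm t < -(1 / Real.sqrt 3)) ∧ (∀ t : ℝ, 1 / Real.sqrt 3 < xp t) := by
  have hsT : ∀ t, Real.sin (ω * (t + T)) = Real.sin (ω * t) := fun t => by
    have : ω * (t + T) = ω * t + 2 * Real.pi := by rw [hT]; field_simp
    rw [this, Real.sin_add_two_pi]
  obtain ⟨xp, hp, hpT, hpu⟩ := exists_right_orbit A ω T hA' hsT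
  obtain ⟨y, hy, hyT, hyu⟩ := exists_right_orbit (-A) ω T (by rwa [abs_neg]) hsT
  have hm : ∀ t, HasDerivAt (fun t => -y t)
      (-(-y t) ^ 3 + -y t + A * Real.sin (ω * t)) t := fun t =>
    (hy t).fun_neg.congr_deriv (by ring)
  exact ⟨fun t => -y t, xp, fun t => (hm t).differentiableAt, fun t => (hp t).differentiableAt,
    fun t => (hm t).deriv, fun t => (hp t).deriv, fun t => by simp only [hyT], hpT,
    fun t => neg_lt_neg (hyu t), hpu⟩
end

section
/- Let T > 0, c₁ < c₂, and let f : ℝ × ℝ → ℝ be continuous, T-periodic in its second argument, Lipschitz in its first argument uniformly in the second, and such that for each t the map x ↦ f(x, t) is strictly decreasing on [c₁, c₂]. If x, y : ℝ → ℝ are differentiable T-periodic solutions of x'(t) = f(x(t), t) with values in [c₁, c₂], then x = y; i.e. there is at most one periodic orbit in the strip [c₁, c₂]. -/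
/-!
The squared distance `g t = (x t - y t) ^ 2` has derivative
`2 (x t - y t) (f (x t) t - f (y t) t)`, which is nonpositive because `f · t` is decreasing on the
strip, and which vanishes only where `x t = y t` because the decrease is strict. So `g` is antitone;
being also `T`-periodic, it has a local minimum at every point, hence its derivative vanishes
everywhere and `x = y`.
-/

open Real

/-- A strictly decreasing function opposes differences: `(a - b) (φ a - φ b)` is negative off the
diagonal. -/
theorem StrictAntiOn.sub_mul_sub_neg {φ : ℝ → ℝ} {s : Set ℝ} (hφ : StrictAntiOn φ s) {a b : ℝ}
    (ha : a ∈ s) (hb : b ∈ s) (hab : a ≠ b) : (a - b) * (φ a - φ b) < 0 := by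
  rcases lt_or_gt_of_ne hab with h | h
  · exact mul_neg_of_neg_of_pos (sub_neg.2 h) (sub_pos.2 (hφ ha hb h))
  · exact mul_neg_of_pos_of_neg (sub_pos.2 h) (sub_neg.2 (hφ hb ha h))

theorem stmt_16 (T c₁ c₂ : ℝ) (hT : 0 < T) (hc : c₁ < c₂)
    (f : ℝ → ℝ → ℝ)
    (hcont : Continuous fun p : ℝ × ℝ => f p.1 p.2)
    (hper : ∀ x t : ℝ, f x (t + T) = f x t)
    (hlip : ∃ K : NNReal, ∀ t : ℝ, LipschitzWith K fun x => f x t)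
    (hanti : ∀ t : ℝ, StrictAntiOn (fun x => f x t) (Set.Icc c₁ c₂))
    (x y : ℝ → ℝ) (hx : Differentiable ℝ x) (hy : Differentiable ℝ y)
    (hx' : ∀ t : ℝ, deriv x t = f (x t) t) (hy' : ∀ t : ℝ, deriv y t = f (y t) t)
    (hxper : ∀ t : ℝ, x (t + T) = x t) (hyper : ∀ t : ℝ, y (t + T) = y t)
    (hxb : ∀ t : ℝ, x t ∈ Set.Icc c₁ c₂) (hyb : ∀ t : ℝ, y t ∈ Set.Icc c₁ c₂) :
    x = y := by
  have hg (t : ℝ) : HasDerivAt (fun s => (x s - y s) ^ 2)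
      (2 * ((x t - y t) * (f (x t) t - f (y t) t))) t := by
    have h := ((hx t).hasDerivAt.sub (hy t).hasDerivAt).pow 2
    rw [hx', hy'] at h
    refine h.congr_deriv ?_
    simp [mul_assoc]
  have hneg (t : ℝ) (hne : x t ≠ y t) : (x t - y t) * (f (x t) t - f (y t) t) < 0 :=
    (hanti t).sub_mul_sub_neg (hxb t) (hyb t) hne
  have hg_anti : Antitone fun s => (x s - y s) ^ 2 := by
    refine antitone_of_deriv_nonpos (fun t => (hg t).differentiableAt) fun t => ?_
    rw [(hg t).deriv]
    rcases eq_or_ne (x t) (y t) with h | h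
    · simp [h]
    · linarith [hneg t h]
  funext t
  by_contra hne
  -- Every `s ≤ t + T` satisfies `g s ≥ g (t + T) = g t`.
  have hmin : IsLocalMin (fun s => (x s - y s) ^ 2) t := by
    filter_upwards [Iio_mem_nhds (lt_add_of_pos_right t hT)] with s hs
    have h := hg_anti (Set.mem_Iio.1 hs).le
    simpa only [hxper, hyper] using h
  linarith [hneg t hne, hmin.hasDerivAt_eq_zero (hg t)]
end

section
/- Let T > 0 and let a : ℝ → ℝ be continuous with a(t + T) = a(t) for all t, and set λ = (1/T)·∫_0^T a(t) dt. Let v : ℝ → ℝ be differentiable, T-periodic, nowhere zero, and satisfy v'(t) = 2·a(t)·v(t) + 1 for all t. Define θ(t) = ∫_0^t a(s) ds − (1/2)·ln( v(t)/v(0) ). Then θ(t + T) = θ(t) + λ·T for all t, and θ'(t) = −1/(2·v(t)) for all t; in particular θ is strictly monotone. -/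
/-! The logarithm `log (v t / v 0)` has derivative `v' / v = 2 a + 1 / v`, so the integral of `a` cancels and
`θ' = -1 / (2 v)`. Being continuous and nowhere zero, `v` has constant sign, hence so does `θ'`.
The quasi-periodicity holds because `t ↦ log (v t / v 0)` is `T`-periodic and the integral of the periodic
function `a` over any window of length `T` is `λ T`. -/

open Real MeasureTheory intervalIntegral

theorem stmt_19 (T : ℝ) (hT : 0 < T) (a : ℝ → ℝ) (hcont : Continuous a)
    (hper : ∀ t : ℝ, a (t + T) = a t)
    (lam : ℝ) (hlam : lam = (1 / T) * ∫ t in (0:ℝ)..T, a t)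
    (v : ℝ → ℝ) (hvdiff : Differentiable ℝ v)
    (hvper : ∀ t : ℝ, v (t + T) = v t) (hvne : ∀ t : ℝ, v t ≠ 0)
    (hv : ∀ t : ℝ, deriv v t = 2 * a t * v t + 1)
    (θ : ℝ → ℝ)
    (hθ : ∀ t : ℝ, θ t = (∫ s in (0:ℝ)..t, a s) - (1 / 2) * Real.log (v t / v 0)) :
    (∀ t : ℝ, θ (t + T) = θ t + lam * T) ∧
    (∀ t : ℝ, HasDerivAt θ (-(1 / (2 * v t))) t) ∧
    (StrictMono θ ∨ StrictAnti θ) := by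
  refine ⟨?_, ?_⟩
  · intro t
    have h1 : (∫ s in (0:ℝ)..(t + T), a s) = (∫ s in (0:ℝ)..t, a s) + ∫ s in t..(t + T), a s :=
      (integral_add_adjacent_intervals (hcont.intervalIntegrable _ _)
        (hcont.intervalIntegrable _ _)).symm
    have h2 : (∫ s in t..(t + T), a s) = ∫ s in (0:ℝ)..T, a s := by
      have h := Function.Periodic.intervalIntegral_add_eq (f := a) (T := T) hper t 0
      rwa [zero_add] at h
    have h3 : lam * T = ∫ s in (0:ℝ)..T, a s := by
      rw [hlam]
      field_simp
    rw [hθ, hθ, hvper, h1, h2, h3]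
    ring
  · have hd : ∀ t : ℝ, HasDerivAt θ (-(1 / (2 * v t))) t := by
      intro t
      have hI : HasDerivAt (fun t => ∫ s in (0:ℝ)..t, a s) (a t) t :=
        hcont.integral_hasStrictDerivAt 0 t |>.hasDerivAt
      have hL := (((hvdiff t).hasDerivAt.div_const (v 0)).log
        (div_ne_zero (hvne t) (hvne 0))).const_mul (1 / 2 : ℝ)
      have h := hI.sub hL
      rw [funext hθ]
      refine h.congr_deriv ?_
      have h0 := hvne 0
      have ht := hvne t
      rw [hv t]
      field_simp
      ring
    refine ⟨hd, ?_⟩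
    -- A sign change of `v` would force a zero by the intermediate value theorem.
    have hsign : (∀ t, v t < 0) ∨ (∀ t, 0 < v t) := by
      by_contra! hcon
      obtain ⟨⟨x, hx⟩, ⟨y, hy⟩⟩ := hcon
      obtain ⟨z, hz⟩ := mem_range_of_exists_le_of_exists_ge hvdiff.continuous ⟨y, hy⟩ ⟨x, hx⟩
      exact hvne z hz
    rcases hsign with hneg | hpos
    · left
      refine strictMono_of_deriv_pos fun t => ?_
      rw [(hd t).deriv, neg_pos]
      exact one_div_neg.mpr (by linarith [hneg t])
    · right
      refine strictAnti_of_deriv_neg fun t => ?_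
      rw [(hd t).deriv, neg_lt_zero]
      exact one_div_pos.mpr (by linarith [hpos t])
end
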